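/- (General Brunn–Minkowski theorem for mixed discriminants.) Let n ≥ 1, 1 ≤ k ≤ n, and fix n×n Hermitian positive semi-definite matrices A^(k+1),…,A^(n). Then the function A ↦ D(A,…,A [k copies], A^(k+1),…,A^(n))^(1/k) is concave on the convex cone of n×n Hermitian positive semi-definite matrices; that is, for all Hermitian positive semi-definite A, B and τ ∈ [0,1], D(τA+(1−τ)B,…,τA+(1−τ)B [k copies], A^(k+1),…,A^(n))^(1/k) ≥ τ·D(A,…,A [k copies], A^(k+1),…,A^(n))^(1/k) + (1−τ)·D(B,…,B [k copies], A^(k+1),…,A^(n))^(1/k). -/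

import Mathlib

open Matrix MeasureTheory Finset ProbabilityTheory
open scoped Classical ComplexOrder

noncomputable section

/-- The mixed discriminant of `n` matrices `A 0, …, A (n-1)`:
`D(A₁,…,Aₙ) = (1/n!) Σ_{σ ∈ Sₙ} det M^σ`, where the `j`-th column of `M^σ`
is the `j`-th column of `A (σ j)`. -/
def mixedDisc {n : ℕ} (A : Fin n → Matrix (Fin n) (Fin n) ℂ) : ℂ :=
  (n.factorial : ℂ)⁻¹ * ∑ σ : Equiv.Perm (Fin n), (Matrix.of fun i j => A (σ j) i j).det

/-- The real value of the mixed discriminant (real for Hermitian arguments). -/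
def mixedDiscR {n : ℕ} (A : Fin n → Matrix (Fin n) (Fin n) ℂ) : ℝ := (mixedDisc A).re

end

/-!
The determinant has no zeros on the tube of matrices `X + iY` with `X` Hermitian and `Y` positive
definite, so it is hyperbolic with respect to the cone of positive definite matrices. By the
Gauss–Lucas theorem, the derivative of a hyperbolic polynomial in a direction of its cone is again
hyperbolic (Gårding). The mixed discriminant is the symmetric multilinear form whose diagonal is the
determinant, and filling one slot of such a form is, up to a constant, a directional derivative.
Hence `A ↦ D(A, …, A, A⁽ᵏ⁺¹⁾, …, A⁽ⁿ⁾)` is hyperbolic of degree `k` when the `A⁽ⁱ⁾` are positive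
definite. On a line `A + zB` through the cone it factors as `D(B) ∏ (z + rᵢ)` with `rᵢ > 0`, and the
superadditivity of the geometric mean, applied to the families `(rᵢ)` and `(1)`, gives the
superadditivity of its `k`-th root on the cone; concavity follows by homogeneity. The semidefinite
case is a limit, perturbing every matrix by `ε • 1`.
-/

section WeightedGeometricMean

theorem prod_rpow_add_prod_rpow_le_prod_add_rpow {ι : Type*} {s : Finset ι} {w x y : ι → ℝ}
    (hw : ∀ i ∈ s, 0 ≤ w i) (hw1 : ∑ i ∈ s, w i = 1) (hx : ∀ i ∈ s, 0 ≤ x i)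
    (hy : ∀ i ∈ s, 0 ≤ y i) :
    ∏ i ∈ s, x i ^ w i + ∏ i ∈ s, y i ^ w i ≤ ∏ i ∈ s, (x i + y i) ^ w i := by
  have hxy : ∀ i ∈ s, 0 ≤ x i + y i := fun i hi => add_nonneg (hx i hi) (hy i hi)
  -- Dividing by `x + y` is harmless where it vanishes: there `u ≤ x + y` vanishes as well.
  have prod_le : ∀ u : ι → ℝ, (∀ i ∈ s, 0 ≤ u i) → (∀ i ∈ s, u i ≤ x i + y i) →
      ∏ i ∈ s, u i ^ w i ≤
        (∑ i ∈ s, w i * (u i / (x i + y i))) * ∏ i ∈ s, (x i + y i) ^ w i := by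
    intro u hu hule
    have hquot : ∀ i ∈ s, 0 ≤ u i / (x i + y i) := fun i hi => div_nonneg (hu i hi) (hxy i hi)
    calc ∏ i ∈ s, u i ^ w i
        = (∏ i ∈ s, (u i / (x i + y i)) ^ w i) * ∏ i ∈ s, (x i + y i) ^ w i := by
          rw [← Finset.prod_mul_distrib]
          refine Finset.prod_congr rfl fun i hi => ?_
          rw [← Real.mul_rpow (hquot i hi) (hxy i hi),
            div_mul_cancel_of_imp fun h => le_antisymm (h ▸ hule i hi) (hu i hi)]
      _ ≤ _ := by
          gcongr
          · exact Finset.prod_nonneg fun i hi => Real.rpow_nonneg (hxy i hi) _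
          · exact Real.geom_mean_le_arith_mean_weighted s w _ hw hw1 hquot
  have sum_le_one :
      ∑ i ∈ s, w i * (x i / (x i + y i)) + ∑ i ∈ s, w i * (y i / (x i + y i)) ≤ 1 := by
    rw [← Finset.sum_add_distrib, ← hw1]
    refine Finset.sum_le_sum fun i hi => ?_
    rw [← mul_add, ← add_div]
    exact mul_le_of_le_one_right (hw i hi) (div_self_le_one _)
  calc ∏ i ∈ s, x i ^ w i + ∏ i ∈ s, y i ^ w i
      ≤ _ := add_le_add (prod_le x hx fun i hi => le_add_of_nonneg_right (hy i hi))
        (prod_le y hy fun i hi => le_add_of_nonneg_left (hx i hi))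
    _ = (∑ i ∈ s, w i * (x i / (x i + y i)) + ∑ i ∈ s, w i * (y i / (x i + y i))) *
          ∏ i ∈ s, (x i + y i) ^ w i := (add_mul ..).symm
    _ ≤ ∏ i ∈ s, (x i + y i) ^ w i :=
        mul_le_of_le_one_left (Finset.prod_nonneg fun i hi => Real.rpow_nonneg (hxy i hi) _)
          sum_le_one

end WeightedGeometricMean

section ComplexPolynomial

open Polynomial

variable {p : ℂ[X]}

theorem eval_derivative_ne_zero_of_roots_im_lt (hdeg : p.natDegree ≠ 0) {x : ℂ}
    (hroots : ∀ z ∈ p.roots, z.im < x.im) : p.derivative.eval x ≠ 0 := by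
  intro hx
  have hderiv : p.derivative ≠ 0 := fun h => hdeg (derivative_eq_zero.1 h)
  have hmem : x ∈ convexHull ℝ (p.rootSet ℂ) :=
    rootSet_derivative_subset_convexHull_rootSet
      (natDegree_pos_iff_degree_pos.1 (Nat.pos_of_ne_zero hdeg))
      (by simpa [mem_rootSet, hderiv] using hx)
  have hsub : p.rootSet ℂ ⊆ {z | z.im < x.im} := fun z hz =>
    hroots z (by simpa [mem_rootSet] using hz)
  exact lt_irrefl x.im (convexHull_min hsub (convex_halfSpace_im_lt x.im) hmem)

theorem eval_derivative_pos_of_roots_lt (hdeg : p.natDegree ≠ 0) {x : ℂ}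
    (hpos : 0 < p.eval x) (hroots : ∀ z ∈ p.roots, z < x) : 0 < p.derivative.eval x := by
  have hsplits := IsAlgClosed.splits p
  have hcard : p.roots ≠ 0 := fun h => hdeg (by rw [hsplits.natDegree_eq_card_roots, h]; rfl)
  rw [hsplits.eval_derivative_eq_eval_mul_sum hpos.ne']
  refine mul_pos hpos ?_
  simpa using Multiset.sum_lt_sum_of_nonempty (f := fun _ => (0 : ℂ)) hcard
    fun z hz => one_div_pos.2 (sub_pos.2 (hroots z hz))

theorem re_eval_ofReal_eq_prod_roots (hroots : ∀ z ∈ p.roots, z.im = 0) (x : ℝ) :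
    (p.eval (x : ℂ)).re = p.leadingCoeff.re * ∏ z : p.roots, (x - (z : ℂ).re) := by
  have hroot : ∀ z : p.roots, (x : ℂ) - z = ((x - (z : ℂ).re : ℝ) : ℂ) := fun z =>
    Complex.ext (by simp) (by simp [hroots z (Multiset.coe_mem)])
  have hprod : (p.roots.map fun z => (x : ℂ) - z).prod = ∏ z : p.roots, ((x : ℂ) - z) := by
    conv_lhs => rw [← Multiset.map_univ_coe p.roots, Multiset.map_map]
    rfl
  rw [(IsAlgClosed.splits p).eval_eq_prod_roots, hprod, Finset.prod_congr rfl fun z _ => hroot z,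
    ← Complex.ofReal_prod, Complex.re_mul_ofReal]

theorem rpow_eval_add_mul_rpow_leadingCoeff_le (hdeg : p.natDegree ≠ 0)
    (hlead : 0 ≤ p.leadingCoeff) {x s : ℝ} (hs : 0 ≤ s) (hroots : ∀ z ∈ p.roots, z ≤ (x : ℂ)) :
    (p.eval (x : ℂ)).re ^ (p.natDegree : ℝ)⁻¹ + s * p.leadingCoeff.re ^ (p.natDegree : ℝ)⁻¹ ≤
      (p.eval ((x + s : ℝ) : ℂ)).re ^ (p.natDegree : ℝ)⁻¹ := by
  have him : ∀ z ∈ p.roots, z.im = 0 := fun z hz => (Complex.le_def.1 (hroots z hz)).2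
  have hre : ∀ z : p.roots, 0 ≤ x - (z : ℂ).re := fun z =>
    sub_nonneg.2 (Complex.le_def.1 (hroots z Multiset.coe_mem)).1
  have hre' : ∀ z : p.roots, 0 ≤ x - (z : ℂ).re + s := fun z => add_nonneg (hre z) hs
  have hcard : Fintype.card p.roots = p.natDegree := by
    rw [Multiset.card_coe, (IsAlgClosed.splits p).natDegree_eq_card_roots]
  have hlead' : 0 ≤ p.leadingCoeff.re := (Complex.le_def.1 hlead).1
  have hsum : ∑ _z : p.roots, (p.natDegree : ℝ)⁻¹ = 1 := by
    simp [hcard, hdeg]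
  have hmean := prod_rpow_add_prod_rpow_le_prod_add_rpow (s := univ)
    (w := fun _ : p.roots => (p.natDegree : ℝ)⁻¹) (y := fun _ => s) (fun _ _ => by positivity) hsum
    (fun z _ => hre z) (fun _ _ => hs)
  have hs_prod : ∏ _z : p.roots, s ^ (p.natDegree : ℝ)⁻¹ = s := by
    rw [Finset.prod_const, card_univ, hcard, Real.rpow_inv_natCast_pow hs hdeg]
  rw [hs_prod, Real.finsetProd_rpow _ _ fun z _ => hre z,
    Real.finsetProd_rpow _ _ fun z _ => hre' z] at hmean
  rw [re_eval_ofReal_eq_prod_roots him, re_eval_ofReal_eq_prod_roots him,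
    Real.mul_rpow hlead' (Finset.prod_nonneg fun z _ => hre z)]
  simp only [add_sub_right_comm]
  rw [Real.mul_rpow hlead' (Finset.prod_nonneg fun z _ => hre' z), mul_comm s, ← mul_add]
  exact mul_le_mul_of_nonneg_left hmean (Real.rpow_nonneg hlead' _)

end ComplexPolynomial

section Hyperbolic

open Polynomial

variable {V : Type*} [AddCommGroup V] [Module ℂ V] [Module ℝ V]

theorem smul_eq_re_smul_add_I_smul [IsScalarTower ℝ ℂ V] (z : ℂ) (v : V) :
    z • v = z.re • v + Complex.I • z.im • v := by
  rw [← algebraMap_smul ℂ z.re, ← algebraMap_smul ℂ z.im, smul_smul, ← add_smul, mul_comm]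
  exact congrArg (· • v) (Complex.re_add_im z).symm

/-- Hyperbolicity in the sense of Gårding of a homogeneous polynomial function `p` of degree `d`
with respect to a cone `K` in a real form `H` of the complex space `V`, encoded as the absence of
zeros on the tube `H + iK` rather than as real-rootedness along lines in `H`. Positivity `0 < p y`
refers to the order of `ℂ`, so it includes that `p y` is real. -/
structure IsHyperbolicOn (H : Submodule ℝ V) (K : ConvexCone ℝ V) (d : ℕ) (p : V → ℂ) : Prop where
  map_smul : ∀ (z : ℂ) (x : V), p (z • x) = z ^ d * p x
  exists_polynomial : ∀ a b : V, ∃ q : ℂ[X], q.natDegree ≤ d ∧ ∀ z, q.eval z = p (a + z • b)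
  pos : ∀ ⦃y : V⦄, y ∈ K → 0 < p y
  ne_zero : ∀ ⦃x y : V⦄, x ∈ H → y ∈ K → p (x + Complex.I • y) ≠ 0

namespace IsHyperbolicOn

variable {H : Submodule ℝ V} {K : ConvexCone ℝ V} {d : ℕ} {p : V → ℂ} {a b x y : V} {q : ℂ[X]}

theorem coeff_eq (hp : IsHyperbolicOn H K d p) (hq : ∀ z, q.eval z = p (a + z • b)) :
    q.coeff d = p b := by
  obtain ⟨r, hrdeg, hr⟩ := hp.exists_polynomial b a
  have heval : ∀ z : ℂ, z ≠ 0 → q.eval z = (r.reflect d).eval z := by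
    intro z hz
    let := invertibleOfNonzero (inv_ne_zero hz)
    have hreflect := eval₂_reflect_mul_pow (RingHom.id ℂ) z⁻¹ d r hrdeg
    rw [eval₂_id, eval₂_id, invOf_eq_inv, inv_inv, hr] at hreflect
    have hscale : a + z • b = z • (b + z⁻¹ • a) := by
      rw [smul_add, smul_inv_smul₀ hz, add_comm]
    rw [hq, hscale, hp.map_smul, ← hreflect, inv_pow, mul_comm _ (z ^ d)⁻¹,
      mul_inv_cancel_left₀ (pow_ne_zero d hz)]
  have hqr : q = r.reflect d := eq_of_infinite_eval_eq _ _
    ((Set.finite_singleton (0 : ℂ)).infinite_compl.mono heval)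
  rw [hqr, coeff_reflect, revAt_le le_rfl, Nat.sub_self, coeff_zero_eq_eval_zero, hr, zero_smul,
    add_zero]

theorem natDegree_eq (hp : IsHyperbolicOn H K d p) (hb : b ∈ K) (hdeg : q.natDegree ≤ d)
    (hq : ∀ z, q.eval z = p (a + z • b)) : q.natDegree = d :=
  natDegree_eq_of_le_of_coeff_ne_zero hdeg (by rw [hp.coeff_eq hq]; exact (hp.pos hb).ne')

theorem leadingCoeff_eq (hp : IsHyperbolicOn H K d p) (hb : b ∈ K) (hdeg : q.natDegree ≤ d)
    (hq : ∀ z, q.eval z = p (a + z • b)) : q.leadingCoeff = p b := by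
  rw [leadingCoeff, hp.natDegree_eq hb hdeg hq, hp.coeff_eq hq]

variable [IsScalarTower ℝ ℂ V]

theorem im_neg_of_eq_zero (hp : IsHyperbolicOn H K d p) (hKH : (K : Set V) ⊆ H) (hx : x ∈ H)
    (hy : y ∈ K) (hb : b ∈ K) {z : ℂ} (hz : p (x + Complex.I • y + z • b) = 0) : z.im < 0 := by
  by_contra! him
  have hy' : y + z.im • b ∈ K := by
    rcases him.eq_or_lt with him | him
    · simpa [← him] using hy
    · exact K.add_mem hy (K.smul_mem him hb)
  refine hp.ne_zero (H.add_mem hx (H.smul_mem z.re (hKH hb))) hy' ?_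
  rw [← hz, smul_eq_re_smul_add_I_smul z b, smul_add, add_add_add_comm]

theorem neg_of_eq_zero (hp : IsHyperbolicOn H K d p) (hKH : (K : Set V) ⊆ H) (ha : a ∈ K)
    (hb : b ∈ K) {z : ℂ} (hz : p (a + z • b) = 0) : z < 0 := by
  have hre : a + z.re • b ∈ H := H.add_mem (hKH ha) (H.smul_mem z.re (hKH hb))
  rw [smul_eq_re_smul_add_I_smul, ← add_assoc] at hz
  have him : z.im = 0 := by
    rcases lt_trichotomy z.im 0 with him | him | him
    · refine absurd ?_ (hp.ne_zero (H.neg_mem hre) (K.smul_mem (neg_pos.2 him) hb))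
      have hneg : -(a + z.re • b) + Complex.I • -z.im • b =
          (-1 : ℂ) • (a + z.re • b + Complex.I • z.im • b) := by module
      rw [hneg, hp.map_smul, hz, mul_zero]
    · exact him
    · exact absurd hz (hp.ne_zero hre (K.smul_mem him hb))
  refine Complex.lt_def.2 ⟨?_, him⟩
  by_contra! hnonneg
  have hmem : a + z.re • b ∈ K := by
    rcases hnonneg.eq_or_lt with hzero | hpos
    · simpa [← hzero] using ha
    · exact K.add_mem ha (K.smul_mem hpos hb)
  refine (hp.pos hmem).ne' ?_
  simpa [him] using hz

theorem eval_zero_derivative_ne_zero (hp : IsHyperbolicOn H K d p) (hKH : (K : Set V) ⊆ H)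
    (hd : d ≠ 0) (hx : x ∈ H) (hy : y ∈ K) (hb : b ∈ K) (hdeg : q.natDegree ≤ d)
    (hq : ∀ z, q.eval z = p (x + Complex.I • y + z • b)) : q.derivative.eval 0 ≠ 0 :=
  eval_derivative_ne_zero_of_roots_im_lt (by rwa [hp.natDegree_eq hb hdeg hq]) fun z hz =>
    hp.im_neg_of_eq_zero hKH hx hy hb (by rw [← hq, (mem_roots'.1 hz).2])

theorem eval_zero_derivative_pos (hp : IsHyperbolicOn H K d p) (hKH : (K : Set V) ⊆ H)
    (hd : d ≠ 0) (ha : a ∈ K) (hb : b ∈ K) (hdeg : q.natDegree ≤ d)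
    (hq : ∀ z, q.eval z = p (a + z • b)) : 0 < q.derivative.eval 0 :=
  eval_derivative_pos_of_roots_lt (by rwa [hp.natDegree_eq hb hdeg hq])
    (by simpa [hq] using hp.pos ha) fun z hz =>
      hp.neg_of_eq_zero hKH ha hb (by rw [← hq, (mem_roots'.1 hz).2])

theorem rpow_add_rpow_le (hp : IsHyperbolicOn H K d p) (hKH : (K : Set V) ⊆ H) (hd : d ≠ 0)
    (ha : a ∈ K) (hb : b ∈ K) :
    (p a).re ^ (d : ℝ)⁻¹ + (p b).re ^ (d : ℝ)⁻¹ ≤ (p (a + b)).re ^ (d : ℝ)⁻¹ := by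
  obtain ⟨q, hdeg, hq⟩ := hp.exists_polynomial a b
  have hnat := hp.natDegree_eq hb hdeg hq
  have hlead := hp.leadingCoeff_eq hb hdeg hq
  have hroots : ∀ z ∈ q.roots, z ≤ ((0 : ℝ) : ℂ) := fun z hz => by
    simpa using (hp.neg_of_eq_zero hKH ha hb (by rw [← hq, (mem_roots'.1 hz).2])).le
  simpa [hnat, hlead, hq] using rpow_eval_add_mul_rpow_leadingCoeff_le (by rwa [hnat])
    (hlead ▸ (hp.pos hb).le) zero_le_one hroots

theorem concaveOn_rpow (hp : IsHyperbolicOn H K d p) (hKH : (K : Set V) ⊆ H) (hd : d ≠ 0) :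
    ConcaveOn ℝ K fun x => (p x).re ^ (d : ℝ)⁻¹ := by
  have hsmul : ∀ c : ℝ, 0 < c → ∀ x ∈ K,
      (p (c • x)).re ^ (d : ℝ)⁻¹ = c * (p x).re ^ (d : ℝ)⁻¹ := by
    intro c hc x hx
    rw [← algebraMap_smul ℂ c, hp.map_smul, Complex.coe_algebraMap, ← Complex.ofReal_pow,
      Complex.re_ofReal_mul, Real.mul_rpow (pow_nonneg hc.le d) (Complex.lt_def.1 (hp.pos hx)).1.le,
      Real.pow_rpow_inv_natCast hc.le hd]
  refine concaveOn_iff_forall_pos.2 ⟨K.convex, fun x hx y hy s t hs ht _ => ?_⟩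
  rw [smul_eq_mul, smul_eq_mul, ← hsmul s hs x hx, ← hsmul t ht y hy]
  exact hp.rpow_add_rpow_le hKH hd (K.smul_mem hs hx) (K.smul_mem ht hy)

end IsHyperbolicOn

end Hyperbolic

section Multilinear

open Polynomial

variable {ι R : Type*} [DecidableEq ι] [CommSemiring R] {M : ι → Type*}
  [∀ i, AddCommMonoid (M i)] [∀ i, Module R (M i)]

/-- The polynomial `z ↦ f w`, where `w i = u i + z • v i` for `i ∈ S` and `w i = u i` otherwise:
the restriction of the multilinear map `f` to a line that is constant in the slots outside `S`. -/
noncomputable def linePoly (f : MultilinearMap R M R) (S : Finset ι) (u v : ∀ i, M i) : R[X] :=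
  ∑ T ∈ S.powerset, monomial #T (f (T.piecewise v u))

variable (f : MultilinearMap R M R) (S : Finset ι) (u v : ∀ i, M i)

theorem natDegree_linePoly_le : (linePoly f S u v).natDegree ≤ #S :=
  natDegree_sum_le_of_forall_le _ _ fun _ hT =>
    (natDegree_monomial_le _).trans (card_le_card (mem_powerset.1 hT))

theorem eval_linePoly (z : R) :
    (linePoly f S u v).eval z = f (S.piecewise (u + z • v) u) := by
  rw [linePoly, eval_finsetSum, add_comm u, f.map_piecewise_add]
  refine Finset.sum_congr rfl fun T _ => ?_
  have hpiecewise : T.piecewise (z • v) u =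
      T.piecewise (fun i => z • T.piecewise v u i) (T.piecewise v u) := by
    ext i
    by_cases hi : i ∈ T <;> simp [hi]
  rw [eval_monomial, hpiecewise, f.map_piecewise_smul, Finset.prod_const, smul_eq_mul, mul_comm]

theorem eval_zero_derivative_linePoly :
    (linePoly f S u v).derivative.eval 0 = ∑ i ∈ S, f (Function.update u i (v i)) := by
  rw [← coeff_zero_eq_eval_zero, coeff_derivative, linePoly, finsetSum_coeff]
  simp only [coeff_monomial, zero_add, Nat.cast_zero, mul_one]
  rw [← Finset.sum_filter, ← powersetCard_eq_filter, powersetCard_one, Finset.sum_map]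
  simp only [Function.Embedding.coeFn_mk, piecewise_singleton]

end Multilinear

section PartialDiag

open Polynomial

variable {ι V : Type*} [DecidableEq ι] [AddCommGroup V] [Module ℂ V]

/-- The homogeneous polynomial `x ↦ f(x, …, x, c)` of degree `#S` obtained from a multilinear form
by putting `x` in the slots in `S` and the fixed vectors `c i` in the slots `i ∉ S`. -/
def partialDiag (f : MultilinearMap ℂ (fun _ : ι => V) ℂ) (S : Finset ι) (c : ι → V) (x : V) : ℂ :=
  f (S.piecewise (fun _ => x) c)

variable {f : MultilinearMap ℂ (fun _ : ι => V) ℂ} {S : Finset ι} {c : ι → V}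

theorem partialDiag_smul (z : ℂ) (x : V) :
    partialDiag f S c (z • x) = z ^ #S * partialDiag f S c x := by
  have hpiecewise : S.piecewise (fun _ => z • x) c =
      S.piecewise (fun i => z • S.piecewise (fun _ => x) c i) (S.piecewise (fun _ => x) c) := by
    ext i
    by_cases hi : i ∈ S <;> simp [hi]
  rw [partialDiag, hpiecewise, f.map_piecewise_smul, Finset.prod_const, smul_eq_mul, partialDiag]

theorem eval_linePoly_piecewise (a b : V) (z : ℂ) :
    (linePoly f S (S.piecewise (fun _ => a) c) fun _ => b).eval z =
      partialDiag f S c (a + z • b) := by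
  rw [eval_linePoly, partialDiag]
  congr 1
  ext i
  by_cases hi : i ∈ S <;> simp [hi]

theorem eval_zero_derivative_linePoly_piecewise
    (hf : ∀ (σ : Equiv.Perm ι) (v : ι → V), f (v ∘ σ) = f v) {j : ι} (hj : j ∈ S) (x : V) :
    (linePoly f S (S.piecewise (fun _ => x) c) fun _ => c j).derivative.eval 0 =
      #S * partialDiag f (S.erase j) c x := by
  have hupdate : ∀ i ∈ S, f (Function.update (S.piecewise (fun _ => x) c) i (c j)) =
      partialDiag f (S.erase j) c x := by
    intro i hi
    rw [partialDiag, ← hf (Equiv.swap i j)]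
    congr 1
    ext l
    simp only [Function.comp_apply, Function.update_apply, Finset.piecewise, mem_erase,
      Equiv.swap_apply_def]
    split_ifs <;> simp_all
  rw [eval_zero_derivative_linePoly, Finset.sum_congr rfl hupdate, Finset.sum_const, nsmul_eq_mul]

variable [Module ℝ V] [IsScalarTower ℝ ℂ V] {H : Submodule ℝ V} {K : ConvexCone ℝ V}

theorem IsHyperbolicOn.partialDiag_erase (hKH : (K : Set V) ⊆ H)
    (hf : ∀ (σ : Equiv.Perm ι) (v : ι → V), f (v ∘ σ) = f v) {j : ι} (hj : j ∈ S)
    (hcj : c j ∈ K) (hp : IsHyperbolicOn H K #S (partialDiag f S c)) :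
    IsHyperbolicOn H K #(S.erase j) (partialDiag f (S.erase j) c) where
  map_smul := partialDiag_smul
  exists_polynomial a b :=
    ⟨_, natDegree_linePoly_le _ _ _ _, eval_linePoly_piecewise a b⟩
  pos y hy := by
    have hpos := hp.eval_zero_derivative_pos hKH (card_ne_zero_of_mem hj) hy hcj
      (natDegree_linePoly_le _ _ _ _) (eval_linePoly_piecewise y (c j))
    rw [eval_zero_derivative_linePoly_piecewise hf hj] at hpos
    have hcard : (0 : ℂ) < #S := Nat.cast_pos.2 (card_pos.2 ⟨j, hj⟩)
    exact (pos_iff_pos_of_mul_pos hpos).1 hcard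
  ne_zero x y hx hy hzero := by
    refine hp.eval_zero_derivative_ne_zero hKH (card_ne_zero_of_mem hj) hx hy hcj
      (natDegree_linePoly_le _ _ _ _) (eval_linePoly_piecewise _ (c j)) ?_
    rw [eval_zero_derivative_linePoly_piecewise hf hj, hzero, mul_zero]

theorem IsHyperbolicOn.partialDiag_of_univ [Fintype ι] (hKH : (K : Set V) ⊆ H)
    (hf : ∀ (σ : Equiv.Perm ι) (v : ι → V), f (v ∘ σ) = f v)
    (hp : IsHyperbolicOn H K (Fintype.card ι) fun x => f fun _ => x) (hc : ∀ i ∉ S, c i ∈ K) :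
    IsHyperbolicOn H K #S (partialDiag f S c) := by
  suffices h : ∀ T : Finset ι, (∀ i ∈ T, c i ∈ K) → IsHyperbolicOn H K #Tᶜ (partialDiag f Tᶜ c) by
    simpa using h Sᶜ (by simpa using hc)
  intro T
  induction T using Finset.induction_on with
  | empty =>
    have hdiag : partialDiag f univ c = fun x => f fun _ => x := by
      ext x
      rw [partialDiag, piecewise_univ]
    exact fun _ => by rwa [compl_empty, card_univ, hdiag]
  | insert j T hj ih =>
    intro hT
    rw [compl_insert]
    exact (ih fun i hi => hT i (mem_insert_of_mem hi)).partialDiag_erase hKH hf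
      (mem_compl.2 hj) (hT j (mem_insert_self j T))

end PartialDiag

section Determinant

variable {m : Type*}

variable (m) in
/-- The cone of positive definite matrices, an open cone in the real space of Hermitian matrices. -/
def posDefCone : ConvexCone ℝ (Matrix m m ℂ) where
  carrier := {M | M.PosDef}
  smul_mem' _ hc _ hM := hM.smul hc
  add_mem' _ hM _ hN := hM.add hN

theorem posDefCone_subset_selfAdjoint :
    (posDefCone m : Set (Matrix m m ℂ)) ⊆ selfAdjoint.submodule ℝ (Matrix m m ℂ) :=
  fun _ hM => PosDef.isHermitian hM

variable [Fintype m] [DecidableEq m]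

theorem det_add_I_smul_ne_zero {X Y : Matrix m m ℂ} (hX : X.IsHermitian) (hY : Y.PosDef) :
    (X + Complex.I • Y).det ≠ 0 := by
  intro hdet
  obtain ⟨v, hv, hker⟩ := exists_mulVec_eq_zero_iff.2 hdet
  have hX_im : (star v ⬝ᵥ (X *ᵥ v)).im = 0 := hX.im_star_dotProduct_mulVec_self v
  have hY_re : 0 < (star v ⬝ᵥ (Y *ᵥ v)).re := (Complex.lt_def.1 (hY.dotProduct_mulVec_pos hv)).1
  have hform : star v ⬝ᵥ (X *ᵥ v) + Complex.I * (star v ⬝ᵥ (Y *ᵥ v)) = 0 := by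
    rw [← smul_eq_mul, ← dotProduct_smul, ← dotProduct_add, ← smul_mulVec, ← add_mulVec, hker,
      dotProduct_zero]
  have him := congrArg Complex.im hform
  rw [Complex.add_im, hX_im, Complex.I_mul_im, Complex.zero_im, zero_add] at him
  exact hY_re.ne' him

end Determinant

section MixedDiscriminant

variable {n : ℕ}

variable (n) in
/-- The mixed discriminant as a multilinear form on `n`-tuples of matrices. Each summand is the
determinant, as an alternating form in the columns, of the `j`-th columns of the matrices `A (σ j)`
(`Matrix.detRowAlternating` reads them as rows). -/
noncomputable def mixedDiscForm :
    MultilinearMap ℂ (fun _ : Fin n => Matrix (Fin n) (Fin n) ℂ) ℂ :=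
  (n.factorial : ℂ)⁻¹ • ∑ σ : Equiv.Perm (Fin n),
    (detRowAlternating.toMultilinearMap.compLinearMap fun j =>
      LinearMap.pi fun i => entryLinearMap ℂ ℂ i j).domDomCongr σ

theorem mixedDiscForm_apply (A : Fin n → Matrix (Fin n) (Fin n) ℂ) :
    mixedDiscForm n A = mixedDisc A := by
  simp only [mixedDiscForm, mixedDisc, _root_.smul_apply, _root_.sum_apply,
    smul_eq_mul]
  congr 1
  refine Finset.sum_congr rfl fun σ _ => ?_
  rw [← det_transpose]
  rfl

theorem mixedDisc_comp_perm (A : Fin n → Matrix (Fin n) (Fin n) ℂ) (π : Equiv.Perm (Fin n)) :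
    mixedDisc (A ∘ π) = mixedDisc A := by
  unfold mixedDisc
  congr 1
  exact Fintype.sum_equiv (Equiv.mulLeft π) _ _ fun σ => rfl

theorem mixedDisc_const (A : Matrix (Fin n) (Fin n) ℂ) : mixedDisc (fun _ => A) = A.det := by
  have hA : (of fun i j => A i j) = A := rfl
  rw [mixedDisc, hA, Finset.sum_const, card_univ, Fintype.card_perm, Fintype.card_fin,
    nsmul_eq_mul, inv_mul_cancel_left₀ (Nat.cast_ne_zero.2 n.factorial_ne_zero)]

theorem continuous_mixedDiscR :
    Continuous (mixedDiscR : (Fin n → Matrix (Fin n) (Fin n) ℂ) → ℝ) := by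
  unfold mixedDiscR mixedDisc
  fun_prop

theorem isHyperbolicOn_mixedDiscForm_diag :
    IsHyperbolicOn (selfAdjoint.submodule ℝ (Matrix (Fin n) (Fin n) ℂ)) (posDefCone (Fin n))
      (Fintype.card (Fin n)) fun A => mixedDiscForm n fun _ => A where
  map_smul z A := by simp [mixedDiscForm_apply, mixedDisc_const]
  exists_polynomial A B := by
    refine ⟨linePoly (mixedDiscForm n) univ (fun _ => A) fun _ => B,
      natDegree_linePoly_le _ _ _ _, fun z => ?_⟩
    rw [eval_linePoly, piecewise_univ]
    rfl
  pos Y hY := by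
    rw [mixedDiscForm_apply, mixedDisc_const]
    exact PosDef.det_pos hY
  ne_zero X Y hX hY := by
    rw [mixedDiscForm_apply, mixedDisc_const]
    exact det_add_I_smul_ne_zero hX hY

theorem isHyperbolicOn_mixedDisc_piecewise {S : Finset (Fin n)}
    {C : Fin n → Matrix (Fin n) (Fin n) ℂ} (hC : ∀ i ∉ S, (C i).PosDef) :
    IsHyperbolicOn (selfAdjoint.submodule ℝ (Matrix (Fin n) (Fin n) ℂ)) (posDefCone (Fin n)) #S
      fun A => mixedDisc (S.piecewise (fun _ => A) C) := by
  have hp := isHyperbolicOn_mixedDiscForm_diag.partialDiag_of_univ posDefCone_subset_selfAdjoint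
    (fun σ A => by rw [mixedDiscForm_apply, mixedDiscForm_apply, mixedDisc_comp_perm]) hC
  exact funext (fun _ => mixedDiscForm_apply _) ▸ hp

theorem tendsto_mixedDiscR_add_smul_one_rpow (A : Fin n → Matrix (Fin n) (Fin n) ℂ) {q : ℝ}
    (hq : 0 ≤ q) :
    Filter.Tendsto (fun ε : ℝ => mixedDiscR (fun i => A i + ε • 1) ^ q) (nhdsWithin 0 (Set.Ioi 0))
      (nhds (mixedDiscR A ^ q)) := by
  have hcont : Continuous fun ε : ℝ => mixedDiscR (fun i => A i + ε • 1) ^ q :=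
    (continuous_mixedDiscR.comp (by fun_prop)).rpow_const fun _ => Or.inr hq
  simpa using (hcont.tendsto 0).mono_left nhdsWithin_le_nhds

theorem concaveOn_mixedDiscR_piecewise_rpow {S : Finset (Fin n)} (hS : S.Nonempty)
    {C : Fin n → Matrix (Fin n) (Fin n) ℂ} (hC : ∀ i ∉ S, (C i).PosSemidef) :
    ConcaveOn ℝ {A : Matrix (Fin n) (Fin n) ℂ | A.PosSemidef}
      fun A => mixedDiscR (S.piecewise (fun _ => A) C) ^ (#S : ℝ)⁻¹ := by
  have hconvex : Convex ℝ {A : Matrix (Fin n) (Fin n) ℂ | A.PosSemidef} :=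
    fun A hA B hB s t hs ht _ => (hA.smul hs).add (hB.smul ht)
  refine ⟨hconvex, fun A hA B hB s t hs ht hst => ?_⟩
  have hposDef : ∀ {M : Matrix (Fin n) (Fin n) ℂ}, M.PosSemidef → ∀ {ε : ℝ}, 0 < ε →
      (M + ε • 1).PosDef := fun hM _ hε => PosDef.posSemidef_add hM (PosDef.one.smul hε)
  have hlim : ∀ M : Matrix (Fin n) (Fin n) ℂ, Filter.Tendsto
      (fun ε : ℝ => mixedDiscR (S.piecewise (fun _ => M + ε • 1) fun i => C i + ε • 1) ^
        (#S : ℝ)⁻¹)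
      (nhdsWithin 0 (Set.Ioi 0))
      (nhds (mixedDiscR (S.piecewise (fun _ => M) C) ^ (#S : ℝ)⁻¹)) := by
    intro M
    convert tendsto_mixedDiscR_add_smul_one_rpow (S.piecewise (fun _ => M) C)
      (inv_nonneg.2 (Nat.cast_nonneg #S)) using 4 with ε
    ext1 i
    by_cases hi : i ∈ S <;> simp [hi]
  refine le_of_tendsto_of_tendsto (((hlim A).const_smul s).add ((hlim B).const_smul t))
    (hlim (s • A + t • B)) ?_
  filter_upwards [self_mem_nhdsWithin] with ε hε
  have hhyp := isHyperbolicOn_mixedDisc_piecewise fun i hi => hposDef (hC i hi) hε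
  have hconcave := (hhyp.concaveOn_rpow posDefCone_subset_selfAdjoint hS.card_ne_zero).2
    (hposDef hA hε) (hposDef hB hε) hs ht hst
  have hcombine : s • (A + ε • 1) + t • (B + ε • 1) = s • A + t • B + ε • 1 := by
    rw [smul_add, smul_add, add_add_add_comm, ← add_smul, hst, one_smul]
  rwa [hcombine] at hconcave

end MixedDiscriminant

/-- **General Brunn–Minkowski theorem for mixed discriminants**: for fixed positive
semi-definite `A⁽ᵏ⁺¹⁾, …, A⁽ⁿ⁾`, the map `A ↦ D(A[k], rest)^(1/k)` is concave on
Hermitian positive semi-definite matrices. -/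
theorem mixedDisc_rpow_concave {n : ℕ} (hn : 1 ≤ n) (k : ℕ) (hk1 : 1 ≤ k) (hkn : k ≤ n)
    (C : Fin n → Matrix (Fin n) (Fin n) ℂ) (hC : ∀ i : Fin n, k ≤ (i : ℕ) → (C i).PosSemidef)
    (A B : Matrix (Fin n) (Fin n) ℂ) (hA : A.PosSemidef) (hB : B.PosSemidef)
    (τ : ℝ) (hτ0 : 0 ≤ τ) (hτ1 : τ ≤ 1) :
    τ * mixedDiscR (fun i => if (i : ℕ) < k then A else C i) ^ (1 / (k : ℝ))
        + (1 - τ) * mixedDiscR (fun i => if (i : ℕ) < k then B else C i) ^ (1 / (k : ℝ))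
      ≤ mixedDiscR (fun i => if (i : ℕ) < k then (τ : ℂ) • A + ((1 - τ : ℝ) : ℂ) • B else C i)
          ^ (1 / (k : ℝ)) := by
  set S : Finset (Fin n) := {i | (i : ℕ) < k}
  have hcard : #S = k := by rw [Fin.card_filter_val_lt, min_eq_right hkn]
  have hmem : ∀ i, i ∈ S ↔ (i : ℕ) < k := by simp [S]
  have hpiecewise : ∀ M,
      S.piecewise (fun _ => M) C = fun i : Fin n => if (i : ℕ) < k then M else C i :=
    fun M => funext fun i => by simp only [Finset.piecewise, hmem]
  have hconcave := (concaveOn_mixedDiscR_piecewise_rpow (card_pos.1 (hcard ▸ hk1)) fun i hi =>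
    hC i (by simpa [hmem] using hi)).2 hA hB hτ0 (sub_nonneg.2 hτ1) (add_sub_cancel τ 1)
  simpa only [hpiecewise, hcard, smul_eq_mul, one_div, Complex.coe_smul] using hconcave
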